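/- arXiv:2203.00571 — 2 statements merged into one kernel-verified Lean document; each statement's English description precedes it below -/
import Mathlib

section
/- For every p ∈ [2,∞] there exists a constant C = C(p) > 0, independent of n, t and a, such that for all integers n ≥ 2, all t > 0, and all a ∈ ℝ^{n-1}: ‖exp(-A_n² t) a‖_{l^p_n} ≤ C t^{-(1/4)(1/2 - 1/p)} ‖a‖_{l²_n}, where exp denotes the matrix exponential and 1/∞ := 0. -/
noncomputable section

open Real Matrix Finset
open scoped ENNReal

/-- The matrix form `A_n` of the discrete Dirichlet Laplacian with mesh size `h = π/n`:
the `(n-1)×(n-1)` matrix `(n²/π²)·tridiag(1, -2, 1)`. -/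
def disLap (n : ℕ) : Matrix (Fin (n - 1)) (Fin (n - 1)) ℝ :=
  Matrix.of fun i j =>
    ((n : ℝ) ^ 2 / Real.pi ^ 2) *
      (if (i : ℕ) = (j : ℕ) then -2
       else if (i : ℕ) + 1 = (j : ℕ) ∨ (j : ℕ) + 1 = (i : ℕ) then 1 else 0)

/-- Discrete `l^p_n` norm `‖a‖ = ((π/n) Σ_{i=1}^{n-1} |a_i|^p)^{1/p}` for `1 ≤ p < ∞`. -/
def lpn (n : ℕ) (p : ℝ) (a : Fin (n - 1) → ℝ) : ℝ :=
  ((Real.pi / n) * ∑ i, |a i| ^ p) ^ (1 / p)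

/-- Discrete `l²_n` norm. -/
def l2n (n : ℕ) (a : Fin (n - 1) → ℝ) : ℝ :=
  Real.sqrt ((Real.pi / n) * ∑ i, (a i) ^ 2)

/-- Discrete `l^∞_n` norm. -/
def linfn (n : ℕ) (a : Fin (n - 1) → ℝ) : ℝ := ⨆ i, |a i|

/-- Discrete `l^p_n` norm for extended `p ∈ [1,∞]`. -/
def lpEn (n : ℕ) (p : ℝ≥0∞) (a : Fin (n - 1) → ℝ) : ℝ :=
  if p = ⊤ then linfn n a else lpn n p.toReal a

/-- Matrix exponential `exp M = Σ_{k≥0} M^k / k!`. -/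
def matExp {m : ℕ} (M : Matrix (Fin m) (Fin m) ℝ) : Matrix (Fin m) (Fin m) ℝ :=
  ∑' k : ℕ, ((k.factorial : ℝ)⁻¹) • M ^ k

/-!
For a Hermitian matrix `B`, the inequality `1 + x ≤ exp x` on the spectrum of `2B` says that
`u = exp(-B) a` satisfies `|u|² + 2 ⟨u, B u⟩ ≤ |a|²`. With `B = t A_n²` this gives both
`‖u‖₂ ≤ ‖a‖₂` and the smoothing bound `‖A_n u‖₂ ≤ t^{-1/2} ‖a‖₂`.

A grid function vanishing at both ends satisfies Agmon's inequality
`w_k⁴ ≤ (Σ (w_{j+1} - w_j)²) (Σ w_j²)`. Summing by parts in the first factor and applying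
Cauchy–Schwarz turns it into the Gagliardo–Nirenberg inequality `‖u‖_∞⁴ ≤ ‖u‖₂³ ‖A_n u‖₂`, hence
`‖u‖_∞ ≤ t^{-1/8} ‖a‖₂`. Interpolating between `l²` and `l^∞` gives the estimate for all
`p ∈ [2, ∞]` with `C = 1`.
-/

section Exponential

lemma one_add_le_normedSpace_exp {A : Type*} [NormedRing A] [StarRing A] [NormedAlgebra ℝ A]
    [ContinuousFunctionalCalculus ℝ A IsSelfAdjoint] [PartialOrder A] [StarOrderedRing A]
    {a : A} (ha : IsSelfAdjoint a) : 1 + a ≤ NormedSpace.exp a := by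
  calc 1 + a = cfc (fun x : ℝ => 1 + x) a := by
        rw [cfc_const_add 1 (fun x => x) a, cfc_id' ℝ a, map_one]
    _ ≤ cfc Real.exp a := cfc_mono fun x _ => by linarith [Real.add_one_le_exp x]
    _ = NormedSpace.exp a := CFC.real_exp_eq_normedSpace_exp ha

variable {ι : Type*} [Fintype ι] [DecidableEq ι]

open scoped MatrixOrder Matrix.Norms.L2Operator in
lemma dotProduct_one_add_mulVec_le {B : Matrix ι ι ℝ} (hB : B.IsHermitian) (u : ι → ℝ) :
    u ⬝ᵥ u + u ⬝ᵥ B *ᵥ u ≤ u ⬝ᵥ NormedSpace.exp B *ᵥ u := by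
  have hpos := (Matrix.le_iff.1 (one_add_le_normedSpace_exp hB)).dotProduct_mulVec_nonneg u
  simp only [star_trivial, sub_mulVec, add_mulVec, one_mulVec, dotProduct_sub,
    dotProduct_add] at hpos
  linarith

lemma dotProduct_exp_neg_mulVec_energy_le {B : Matrix ι ι ℝ} (hB : B.IsHermitian) {a u : ι → ℝ}
    (hu : u = NormedSpace.exp (-B) *ᵥ a) :
    u ⬝ᵥ u + 2 * (u ⬝ᵥ B *ᵥ u) ≤ a ⬝ᵥ a := by
  have ha : NormedSpace.exp B *ᵥ u = a := by
    rw [hu, mulVec_mulVec, ← Matrix.exp_add_of_commute B (-B) (Commute.refl B).neg_right,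
      add_neg_cancel, NormedSpace.exp_zero, one_mulVec]
  have hsymm : (NormedSpace.exp B)ᵀ = NormedSpace.exp B := hB.exp
  have hexp : NormedSpace.exp ((2 : ℕ) • B) = NormedSpace.exp B * NormedSpace.exp B := by
    rw [Matrix.exp_nsmul, sq]
  calc u ⬝ᵥ u + 2 * (u ⬝ᵥ B *ᵥ u) = u ⬝ᵥ u + u ⬝ᵥ ((2 : ℕ) • B) *ᵥ u := by
        rw [two_nsmul, add_mulVec, dotProduct_add, two_mul]
    _ ≤ u ⬝ᵥ NormedSpace.exp ((2 : ℕ) • B) *ᵥ u :=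
        dotProduct_one_add_mulVec_le (by rw [two_nsmul]; exact hB.add hB) u
    _ = (NormedSpace.exp B *ᵥ u) ⬝ᵥ (NormedSpace.exp B *ᵥ u) := by
        rw [hexp, ← mulVec_mulVec, dotProduct_mulVec, ← mulVec_transpose, hsymm]
    _ = a ⬝ᵥ a := by rw [ha]

end Exponential

lemma matExp_eq_exp {m : ℕ} (M : Matrix (Fin m) (Fin m) ℝ) : matExp M = NormedSpace.exp M := by
  rw [matExp, NormedSpace.exp_eq_tsum ℝ]

section Sequences

variable {w : ℕ → ℝ} {N k : ℕ}

lemma two_mul_abs_le_sum_abs_sub (h0 : w 0 = 0) (hN : w N = 0) (hk : k ≤ N) :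
    2 * |w k| ≤ ∑ j ∈ range N, |w (j + 1) - w j| := by
  have hleft := dist_le_Ico_sum_dist w k.zero_le
  have hright := dist_le_Ico_sum_dist w hk
  simp only [Real.dist_eq, h0, hN, zero_sub, sub_zero, abs_neg, abs_sub_comm (w _) (w (_ + 1))]
    at hleft hright
  rw [range_eq_Ico, ← sum_Ico_consecutive _ k.zero_le hk]
  linarith

lemma pow_four_le_sum_sub_sq_mul_sum_sq (h0 : w 0 = 0) (hN : w N = 0) (hk : k ≤ N) :
    w k ^ 4 ≤ (∑ j ∈ range N, (w (j + 1) - w j) ^ 2) * ∑ j ∈ range N, w j ^ 2 := by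
  have hshift : ∑ j ∈ range N, w (j + 1) ^ 2 = ∑ j ∈ range N, w j ^ 2 := by
    have := (sum_range_succ (fun j => w j ^ 2) N).symm.trans (sum_range_succ' _ N)
    simpa [h0, hN] using this.symm
  have hsum : ∑ j ∈ range N, |w (j + 1) + w j| ^ 2 ≤ 4 * ∑ j ∈ range N, w j ^ 2 := by
    calc ∑ j ∈ range N, |w (j + 1) + w j| ^ 2
        ≤ ∑ j ∈ range N, 2 * (w (j + 1) ^ 2 + w j ^ 2) := by
          gcongr with j
          rw [sq_abs]
          exact add_sq_le
      _ = 4 * ∑ j ∈ range N, w j ^ 2 := by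
          rw [← mul_sum, sum_add_distrib, hshift]
          ring
  have htv : 2 * w k ^ 2 ≤ ∑ j ∈ range N, |w (j + 1) - w j| * |w (j + 1) + w j| := by
    have := two_mul_abs_le_sum_abs_sub (w := fun j => w j ^ 2) (by simp [h0]) (by simp [hN]) hk
    simpa only [abs_sq, sq_sub_sq, abs_mul, mul_comm |_ + _|] using this
  have hsq : (2 * w k ^ 2) ^ 2 ≤
      (∑ j ∈ range N, (w (j + 1) - w j) ^ 2) * (4 * ∑ j ∈ range N, w j ^ 2) := by
    calc (2 * w k ^ 2) ^ 2
        ≤ (∑ j ∈ range N, |w (j + 1) - w j| * |w (j + 1) + w j|) ^ 2 := by gcongr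
      _ ≤ (∑ j ∈ range N, |w (j + 1) - w j| ^ 2) * ∑ j ∈ range N, |w (j + 1) + w j| ^ 2 :=
          sum_mul_sq_le_sq_mul_sq _ _ _
      _ ≤ _ := by
          simp only [sq_abs (w (_ + 1) - w _)]
          gcongr
  linarith

lemma sum_sub_sq_eq_neg_sum_mul_second_diff (w : ℕ → ℝ) (m : ℕ) :
    ∑ j ∈ range (m + 1), (w (j + 1) - w j) ^ 2 =
      w (m + 1) * (w (m + 1) - w m) - w 0 * (w 1 - w 0)
        - ∑ j ∈ range m, w (j + 1) * (w (j + 2) - 2 * w (j + 1) + w j) := by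
  induction m with
  | zero => simp; ring
  | succ m ih => rw [sum_range_succ, ih, sum_range_succ]; ring

end Sequences

section ZeroExtension

variable {m : ℕ}

/-- The grid function `k ↦ u_k` of a vector `u = (u_1, …, u_m)`, extended by zero to all other
`k : ℕ`, in particular to the boundary points `0` and `m + 1`. The entry `u_{i+1}` is `u i` for
`i : Fin m`. -/
def zeroExt (u : Fin m → ℝ) : ℕ → ℝ := Function.extend (fun i : Fin m => (i : ℕ) + 1) u 0

lemma zeroExt_succ (u : Fin m → ℝ) (i : Fin m) : zeroExt u (i + 1) = u i :=
  Function.Injective.extend_apply (fun _ _ h => Fin.ext (Nat.succ_injective h)) u 0 i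

lemma zeroExt_eq_zero (u : Fin m → ℝ) {k : ℕ} (hk : ∀ i : Fin m, (i : ℕ) + 1 ≠ k) :
    zeroExt u k = 0 :=
  Function.extend_apply' u (0 : ℕ → ℝ) k fun ⟨i, hi⟩ => hk i hi

lemma zeroExt_zero (u : Fin m → ℝ) : zeroExt u 0 = 0 :=
  zeroExt_eq_zero u fun i => (i : ℕ).succ_ne_zero

lemma zeroExt_last (u : Fin m → ℝ) : zeroExt u (m + 1) = 0 :=
  zeroExt_eq_zero u fun i => by omega

lemma sum_ite_succ_eq_zeroExt (u : Fin m → ℝ) (k : ℕ) :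
    ∑ j : Fin m, (if (j : ℕ) + 1 = k then u j else 0) = zeroExt u k := by
  by_cases hk : ∃ i : Fin m, (i : ℕ) + 1 = k
  · obtain ⟨i, rfl⟩ := hk
    simp [zeroExt_succ, Fin.val_inj]
  · push Not at hk
    simp [zeroExt_eq_zero u hk, hk]

end ZeroExtension

section DiscreteNorms

variable {n : ℕ}

lemma l2n_nonneg (u : Fin (n - 1) → ℝ) : 0 ≤ l2n n u := Real.sqrt_nonneg _

lemma l2n_sq (u : Fin (n - 1) → ℝ) : l2n n u ^ 2 = π / n * (u ⬝ᵥ u) := by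
  rw [l2n, Real.sq_sqrt (by positivity)]
  simp only [dotProduct, sq]

lemma linfn_nonneg (u : Fin (n - 1) → ℝ) : 0 ≤ linfn n u := Real.iSup_nonneg fun _ => abs_nonneg _

lemma abs_le_linfn (u : Fin (n - 1) → ℝ) (i : Fin (n - 1)) : |u i| ≤ linfn n u :=
  le_ciSup (f := fun i => |u i|) (Set.finite_range _).bddAbove i

lemma abs_dotProduct_le_l2n_mul_l2n (u v : Fin (n - 1) → ℝ) :
    π / n * |u ⬝ᵥ v| ≤ l2n n u * l2n n v := by
  have hcs : |u ⬝ᵥ v| ≤ √(∑ i, u i ^ 2) * √(∑ i, v i ^ 2) := by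
    rw [← Real.sqrt_mul (by positivity)]
    exact Real.abs_le_sqrt (sum_mul_sq_le_sq_mul_sq _ _ _)
  calc π / n * |u ⬝ᵥ v| ≤ π / n * (√(∑ i, u i ^ 2) * √(∑ i, v i ^ 2)) := by gcongr
    _ = √(π / n) * √(π / n) * (√(∑ i, u i ^ 2) * √(∑ i, v i ^ 2)) := by
        rw [Real.mul_self_sqrt (by positivity)]
    _ = l2n n u * l2n n v := by
        rw [l2n, l2n, Real.sqrt_mul (by positivity), Real.sqrt_mul (by positivity)]
        ring

lemma lpn_le_linfn_rpow_mul_l2n_rpow {q : ℝ} (hq : 2 ≤ q) (u : Fin (n - 1) → ℝ) :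
    lpn n q u ≤ linfn n u ^ (1 - 2 * q⁻¹) * l2n n u ^ (2 * q⁻¹) := by
  have hq0 : q ≠ 0 := by linarith
  have hM := linfn_nonneg u
  have hpow (i) : |u i| ^ q ≤ linfn n u ^ (q - 2) * u i ^ 2 := by
    calc |u i| ^ q = |u i| ^ (q - 2) * |u i| ^ (2 : ℝ) := by
          rw [← Real.rpow_add_of_nonneg (abs_nonneg _) (by linarith) zero_le_two, sub_add_cancel]
      _ ≤ linfn n u ^ (q - 2) * u i ^ 2 := by
          rw [Real.rpow_two, sq_abs]
          gcongr
          exact abs_le_linfn u i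
  have hsum : π / n * ∑ i, |u i| ^ q ≤ linfn n u ^ (q - 2) * l2n n u ^ 2 := by
    calc π / n * ∑ i, |u i| ^ q ≤ π / n * ∑ i, linfn n u ^ (q - 2) * u i ^ 2 := by
          gcongr with i
          exact hpow i
      _ = linfn n u ^ (q - 2) * l2n n u ^ 2 := by
          rw [← mul_sum, l2n, Real.sq_sqrt (by positivity)]
          ring
  calc lpn n q u ≤ (linfn n u ^ (q - 2) * l2n n u ^ (2 : ℝ)) ^ q⁻¹ := by
        rw [lpn, one_div, Real.rpow_two]
        gcongr
    _ = linfn n u ^ (1 - 2 * q⁻¹) * l2n n u ^ (2 * q⁻¹) := by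
        rw [Real.mul_rpow (by positivity) (Real.rpow_nonneg (l2n_nonneg u) _), ← Real.rpow_mul hM,
          ← Real.rpow_mul (l2n_nonneg u), sub_mul, mul_inv_cancel₀ hq0]

lemma lpEn_le_linfn_rpow_mul_l2n_rpow {p : ℝ≥0∞} (hp : 2 ≤ p) (u : Fin (n - 1) → ℝ) :
    lpEn n p u ≤ linfn n u ^ (1 - 2 * (p⁻¹).toReal) * l2n n u ^ (2 * (p⁻¹).toReal) := by
  by_cases htop : p = ⊤
  · simp [lpEn, htop]
  · rw [lpEn, if_neg htop, ENNReal.toReal_inv]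
    exact lpn_le_linfn_rpow_mul_l2n_rpow (by simpa using ENNReal.toReal_mono htop hp) u

end DiscreteNorms

section DiscreteLaplacian

variable {n : ℕ}

lemma disLap_isHermitian (n : ℕ) : (disLap n).IsHermitian := by
  ext i j
  simp only [disLap, conjTranspose_apply, of_apply, star_trivial, eq_comm (a := (j : ℕ)),
    or_comm (a := (j : ℕ) + 1 = i)]

lemma disLap_mulVec (u : Fin (n - 1) → ℝ) (i : Fin (n - 1)) :
    (disLap n *ᵥ u) i =
      n ^ 2 / π ^ 2 * (zeroExt u (i + 2) - 2 * zeroExt u (i + 1) + zeroExt u i) := by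
  simp only [mulVec, dotProduct, disLap, of_apply, ← sum_ite_succ_eq_zeroExt, mul_sum,
    ← sum_add_distrib, ← sum_sub_distrib]
  refine sum_congr rfl fun j _ => ?_
  rw [mul_assoc]
  congr 1
  split_ifs <;> first | omega | ring

lemma sum_zeroExt_sub_sq (hn : n ≠ 0) (u : Fin (n - 1) → ℝ) :
    ∑ j ∈ range (n - 1 + 1), (zeroExt u (j + 1) - zeroExt u j) ^ 2 =
      -((π / n) ^ 2 * (u ⬝ᵥ disLap n *ᵥ u)) := by
  rw [sum_sub_sq_eq_neg_sum_mul_second_diff, zeroExt_zero, zeroExt_last, zero_mul, zero_mul,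
    sub_zero, zero_sub, neg_inj, sum_range, dotProduct, mul_sum]
  refine sum_congr rfl fun j _ => ?_
  rw [disLap_mulVec, zeroExt_succ]
  field_simp

lemma sum_zeroExt_sq (u : Fin (n - 1) → ℝ) :
    ∑ j ∈ range (n - 1 + 1), zeroExt u j ^ 2 = u ⬝ᵥ u := by
  simp [sum_range_succ', zeroExt_zero, sum_range, zeroExt_succ, dotProduct, sq]

lemma abs_pow_four_le_l2n_pow_three_mul_l2n_disLap (hn : n ≠ 0) (u : Fin (n - 1) → ℝ)
    (i : Fin (n - 1)) : |u i| ^ 4 ≤ l2n n u ^ 3 * l2n n (disLap n *ᵥ u) := by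
  calc |u i| ^ 4 = zeroExt u (i + 1) ^ 4 := by rw [zeroExt_succ, Even.pow_abs (by decide)]
    _ ≤ -((π / n) ^ 2 * (u ⬝ᵥ disLap n *ᵥ u)) * (u ⬝ᵥ u) := by
        rw [← sum_zeroExt_sub_sq hn, ← sum_zeroExt_sq u]
        exact pow_four_le_sum_sub_sq_mul_sum_sq (zeroExt_zero u) (zeroExt_last u) (by omega)
    _ = π / n * -(u ⬝ᵥ disLap n *ᵥ u) * l2n n u ^ 2 := by
        rw [l2n_sq]
        ring
    _ ≤ π / n * |u ⬝ᵥ disLap n *ᵥ u| * l2n n u ^ 2 := by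
        gcongr
        exact neg_le_abs _
    _ ≤ l2n n u * l2n n (disLap n *ᵥ u) * l2n n u ^ 2 := by
        gcongr ?_ * _
        exact abs_dotProduct_le_l2n_mul_l2n _ _
    _ = l2n n u ^ 3 * l2n n (disLap n *ᵥ u) := by ring

end DiscreteLaplacian

section Semigroup

/-- The discrete biharmonic semigroup `exp(-A_n² t)` applied to `a`: the solution at time `t` of
`u' = -A_n² u` with initial value `a`. -/
def biharmonicFlow (n : ℕ) (t : ℝ) (a : Fin (n - 1) → ℝ) : Fin (n - 1) → ℝ :=
  matExp ((-t) • (disLap n * disLap n)) *ᵥ a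

variable {n : ℕ} {t : ℝ}

lemma biharmonicFlow_energy_le (t : ℝ) (a : Fin (n - 1) → ℝ) :
    l2n n (biharmonicFlow n t a) ^ 2 + 2 * t * l2n n (disLap n *ᵥ biharmonicFlow n t a) ^ 2 ≤
      l2n n a ^ 2 := by
  have hherm : (t • (disLap n * disLap n)).IsHermitian := by
    rw [← sq]
    exact ((disLap_isHermitian n).pow 2).smul (IsSelfAdjoint.all t)
  have hu : biharmonicFlow n t a = NormedSpace.exp (-(t • (disLap n * disLap n))) *ᵥ a := by
    rw [biharmonicFlow, matExp_eq_exp, neg_smul]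
  have henergy := dotProduct_exp_neg_mulVec_energy_le hherm hu
  set u := biharmonicFlow n t a
  have hform : u ⬝ᵥ (t • (disLap n * disLap n)) *ᵥ u
      = t * ((disLap n *ᵥ u) ⬝ᵥ (disLap n *ᵥ u)) := by
    rw [smul_mulVec, dotProduct_smul, smul_eq_mul, ← mulVec_mulVec, dotProduct_mulVec u,
      ← mulVec_transpose, show (disLap n)ᵀ = disLap n from disLap_isHermitian n]
  calc l2n n u ^ 2 + 2 * t * l2n n (disLap n *ᵥ u) ^ 2
      = π / n * (u ⬝ᵥ u + 2 * (u ⬝ᵥ (t • (disLap n * disLap n)) *ᵥ u)) := by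
        rw [l2n_sq, l2n_sq, hform]
        ring
    _ ≤ l2n n a ^ 2 := by
        rw [l2n_sq]
        gcongr

lemma l2n_biharmonicFlow_le (ht : 0 ≤ t) (a : Fin (n - 1) → ℝ) :
    l2n n (biharmonicFlow n t a) ≤ l2n n a := by
  have hpos : 0 ≤ 2 * t * l2n n (disLap n *ᵥ biharmonicFlow n t a) ^ 2 := by positivity
  exact le_of_sq_le_sq (by linarith [biharmonicFlow_energy_le t a]) (l2n_nonneg a)

lemma l2n_disLap_biharmonicFlow_le (ht : 0 < t) (a : Fin (n - 1) → ℝ) :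
    l2n n (disLap n *ᵥ biharmonicFlow n t a) ≤ t ^ (-(1 / 2) : ℝ) * l2n n a := by
  have hsq : (t ^ (-(1 / 2) : ℝ)) ^ 2 = t⁻¹ := by
    rw [← Real.rpow_mul_natCast ht.le, ← Real.rpow_neg_one]
    norm_num
  have hpos : 0 ≤ t * l2n n (disLap n *ᵥ biharmonicFlow n t a) ^ 2 := by positivity
  refine le_of_sq_le_sq ?_ (mul_nonneg (by positivity) (l2n_nonneg a))
  rw [mul_pow, hsq, ← div_eq_inv_mul, le_div_iff₀' ht]
  linarith [biharmonicFlow_energy_le t a, sq_nonneg (l2n n (biharmonicFlow n t a))]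

lemma linfn_biharmonicFlow_le (hn : n ≠ 0) (ht : 0 < t) (a : Fin (n - 1) → ℝ) :
    linfn n (biharmonicFlow n t a) ≤ t ^ (-(1 / 8) : ℝ) * l2n n a := by
  have hpow : (t ^ (-(1 / 8) : ℝ)) ^ 4 = t ^ (-(1 / 2) : ℝ) := by
    rw [← Real.rpow_mul_natCast ht.le]
    norm_num
  have ha := l2n_nonneg a
  set u := biharmonicFlow n t a
  have hu := l2n_nonneg u
  have hAu := l2n_nonneg (disLap n *ᵥ u)
  refine Real.iSup_le (fun i => le_of_pow_le_pow_left₀ four_ne_zero (by positivity) ?_)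
    (by positivity)
  calc |u i| ^ 4 ≤ l2n n u ^ 3 * l2n n (disLap n *ᵥ u) :=
        abs_pow_four_le_l2n_pow_three_mul_l2n_disLap hn u i
    _ ≤ l2n n a ^ 3 * (t ^ (-(1 / 2) : ℝ) * l2n n a) := by
        gcongr
        · exact l2n_biharmonicFlow_le ht.le a
        · exact l2n_disLap_biharmonicFlow_le ht a
    _ = (t ^ (-(1 / 8) : ℝ) * l2n n a) ^ 4 := by
        rw [mul_pow, hpow]
        ring

end Semigroup

/-- For every `p ∈ [2,∞]` there is `C = C(p) > 0`, independent of `n`, `t` and `a`, such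
that for all `n ≥ 2`, `t > 0`, `a ∈ ℝ^{n-1}`:
`‖exp(-A_n² t) a‖_{l^p_n} ≤ C t^{-(1/4)(1/2 - 1/p)} ‖a‖_{l²_n}` (with `1/∞ := 0`). -/
theorem stmt3 (p : ℝ≥0∞) (hp : 2 ≤ p) :
    ∃ C : ℝ, 0 < C ∧ ∀ n : ℕ, 2 ≤ n → ∀ t : ℝ, 0 < t → ∀ a : Fin (n - 1) → ℝ,
      lpEn n p ((matExp ((-t) • (disLap n * disLap n))).mulVec a)
        ≤ C * t ^ (-(1 / 4 : ℝ) * (1 / 2 - (p⁻¹).toReal)) * l2n n a := by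
  refine ⟨1, one_pos, fun n hn t ht a => ?_⟩
  set u := biharmonicFlow n t a
  set r := (p⁻¹).toReal
  have hr : 0 ≤ 1 - 2 * r := by
    have : r ≤ 2⁻¹ := by simpa [r] using ENNReal.toReal_mono (by simp) (ENNReal.inv_le_inv.2 hp)
    linarith
  have ha := l2n_nonneg a
  have hu₂ := l2n_nonneg u
  have hu_inf := linfn_nonneg u
  calc lpEn n p u ≤ linfn n u ^ (1 - 2 * r) * l2n n u ^ (2 * r) :=
        lpEn_le_linfn_rpow_mul_l2n_rpow hp u
    _ ≤ (t ^ (-(1 / 8) : ℝ) * l2n n a) ^ (1 - 2 * r) * l2n n a ^ (2 * r) := by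
        gcongr
        · exact linfn_biharmonicFlow_le (by omega) ht a
        · exact l2n_biharmonicFlow_le ht.le a
    _ = (t ^ (-(1 / 8) : ℝ)) ^ (1 - 2 * r) * l2n n a := by
        rw [Real.mul_rpow (by positivity) ha, mul_assoc,
          ← Real.rpow_add_of_nonneg ha hr (by positivity), sub_add_cancel, Real.rpow_one]
    _ = 1 * t ^ (-(1 / 4 : ℝ) * (1 / 2 - r)) * l2n n a := by
        rw [← Real.rpow_mul ht.le, one_mul]
        ring_nf
end
end

section
/- For every α ∈ (0,1) and every T > 0 there exists a constant C = C(α,T) > 0, independent of n, such that for all integers n ≥ 2, all x, y ∈ (0,π), and all 0 ≤ s < t ≤ T: ∫₀ˢ ∫₀^π |G^n_{t-r}(x,z) - G^n_{s-r}(y,z)|² dz dr ≤ C (|x-y|² + (t-s)^{3α/4}), and ∫ₛᵗ ∫₀^π |G^n_{t-r}(x,z)|² dz dr ≤ C (t-s)^{3/4}. -/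
noncomputable section

open Real intervalIntegral

/-- The Dirichlet eigenfunctions `φ_j(x) = √(2/π) sin(jx)` on `(0,π)`. -/
def phiF (j : ℕ) (x : ℝ) : ℝ := Real.sqrt (2 / Real.pi) * Real.sin (j * x)

/-- The Green function of `∂_t + Δ²` with Dirichlet boundary conditions on `(0,π)`:
`G_t(x,y) = Σ_{j≥1} e^{-j⁴ t} φ_j(x) φ_j(y)`. -/
def GF (t x y : ℝ) : ℝ :=
  ∑' j : ℕ, Real.exp (-((j : ℝ) + 1) ^ 4 * t) * phiF (j + 1) x * phiF (j + 1) y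

/-- `ΔG_t(x,y) = -Σ_{j≥1} j² e^{-j⁴ t} φ_j(x) φ_j(y)`. -/
def DGF (t x y : ℝ) : ℝ :=
  -∑' j : ℕ, ((j : ℝ) + 1) ^ 2 * Real.exp (-((j : ℝ) + 1) ^ 4 * t) * phiF (j + 1) x * phiF (j + 1) y

/-- The grid projection `κ_n(y) = h⌊y/h⌋` with `h = π/n`. -/
def kap (n : ℕ) (y : ℝ) : ℝ := (Real.pi / n) * ⌊y / (Real.pi / n)⌋

/-- The eigenvalue `λ_{j,n} = -(4n²/π²) sin²(jπ/(2n))` of the discrete Dirichlet Laplacian. -/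
def lamEig (j n : ℕ) : ℝ :=
  -(4 * (n : ℝ) ^ 2 / Real.pi ^ 2) * Real.sin ((j : ℝ) * Real.pi / (2 * n)) ^ 2

/-- The piecewise-linear interpolant `φ_{j,n}` of `φ_j` on the grid `{0, h, …, π}`. -/
def phiIn (n j : ℕ) (x : ℝ) : ℝ :=
  phiF j (kap n x)
    + ((n : ℝ) / Real.pi) * (x - kap n x) * (phiF j (kap n x + Real.pi / n) - phiF j (kap n x))

/-- The spatially discrete Green function
`G^n_t(x,y) = Σ_{j=1}^{n-1} e^{-λ_{j,n}² t} φ_{j,n}(x) φ_j(κ_n(y))`. -/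
def Gn (n : ℕ) (t x y : ℝ) : ℝ :=
  ∑ j ∈ Finset.range (n - 1),
    Real.exp (-(lamEig (j + 1) n) ^ 2 * t) * phiIn n (j + 1) x * phiF (j + 1) (kap n y)

/-- `Δ_nG^n_t(x,y) = Σ_{j=1}^{n-1} λ_{j,n} e^{-λ_{j,n}² t} φ_{j,n}(x) φ_j(κ_n(y))`. -/
def DGn (n : ℕ) (t x y : ℝ) : ℝ :=
  ∑ j ∈ Finset.range (n - 1),
    lamEig (j + 1) n * Real.exp (-(lamEig (j + 1) n) ^ 2 * t)
      * phiIn n (j + 1) x * phiF (j + 1) (kap n y)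

/-- The fully discrete Green function
`G^{n,τ}_t(x,y) = Σ_{j=1}^{n-1} (1 + τλ_{j,n}²)^{-⌊t/τ⌋} φ_{j,n}(x) φ_j(κ_n(y))`. -/
def Gnt (n : ℕ) (τ t x y : ℝ) : ℝ :=
  ∑ j ∈ Finset.range (n - 1),
    ((1 + τ * (lamEig (j + 1) n) ^ 2) ^ (⌊t / τ⌋₊))⁻¹ * phiIn n (j + 1) x * phiF (j + 1) (kap n y)

/-- `Δ_nG^{n,τ}_t(x,y) = Σ_{j=1}^{n-1} λ_{j,n} (1 + τλ_{j,n}²)^{-⌊t/τ⌋} φ_{j,n}(x) φ_j(κ_n(y))`. -/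
def DGnt (n : ℕ) (τ t x y : ℝ) : ℝ :=
  ∑ j ∈ Finset.range (n - 1),
    lamEig (j + 1) n * ((1 + τ * (lamEig (j + 1) n) ^ 2) ^ (⌊t / τ⌋₊))⁻¹
      * phiIn n (j + 1) x * phiF (j + 1) (kap n y)

/-!
The vectors `(φ_j(kh))_k`, `0 < j < n`, are orthonormal for `h ∑_k`, so integrating over `z` turns
both left-hand sides into sums over the modes `j` of squares of exponentials. Integrating in time,
the first one is at most `∑_j (min (t - s) λ_j⁻² + (φ_{j,n}(x) - φ_{j,n}(y))² λ_j⁻²)` and the second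
one at most `∑_j min (t - s) λ_j⁻²`. Now `λ_j² ≥ j⁴ / 16`, piecewise-linear interpolation keeps the
Lipschitz constant `j` of `φ_j`, and the sum of `min d (16 / j⁴)` is of order `d ^ (3/4)`: the
minimum is `d` for `j ≲ d ^ (-1/4)` and the remaining terms sum to the same order.
-/

section Orthonormality

lemma two_mul_sin_mul_sum_range_cos (θ : ℝ) (n : ℕ) :
    2 * sin θ * ∑ k ∈ Finset.range n, cos (2 * k * θ) = sin ((2 * n - 1) * θ) + sin θ := by
  have htel (k : ℕ) : 2 * sin θ * cos (2 * k * θ)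
      = sin ((2 * (k + 1 : ℕ) - 1) * θ) - sin ((2 * k - 1) * θ) := by
    rw [two_mul_sin_mul_cos, show θ - 2 * k * θ = -((2 * k - 1) * θ) by ring, sin_neg]
    push_cast
    ring_nf
  rw [Finset.mul_sum, Finset.sum_congr rfl fun k _ => htel k,
    Finset.sum_range_sub (fun k : ℕ => sin ((2 * k - 1) * θ))]
  simp

lemma sum_range_cos_int_mul_pi_div {n : ℕ} (hn : 0 < n) {m : ℤ} (hm : ¬ (2 * n : ℤ) ∣ m) :
    ∑ k ∈ Finset.range n, cos (m * (π / n * k)) = (1 - cos (m * π)) / 2 := by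
  have hn' : (n : ℝ) ≠ 0 := by positivity
  set θ : ℝ := m * π / (2 * n) with hθ
  have hsin : sin θ ≠ 0 := by
    intro h
    obtain ⟨k, hk⟩ := sin_eq_zero_iff.1 h
    refine hm ⟨k, ?_⟩
    have : (m : ℝ) = 2 * n * k := by
      rw [hθ] at hk
      field_simp at hk
      linarith
    exact_mod_cast this
  have hsum := two_mul_sin_mul_sum_range_cos θ n
  rw [show (2 * n - 1) * θ = m * π - θ by rw [hθ]; field_simp, sin_sub, sin_int_mul_pi] at hsum
  have hcongr (k : ℕ) : (m : ℝ) * (π / n * k) = 2 * k * θ := by rw [hθ]; field_simp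
  simp only [hcongr]
  refine mul_left_cancel₀ (mul_ne_zero two_ne_zero hsin) ?_
  linear_combination hsum

lemma phiF_mul_phiF (i j : ℕ) (x : ℝ) :
    phiF i x * phiF j x = (cos ((i - j : ℤ) * x) - cos ((i + j : ℤ) * x)) / π := by
  have hsq : √(2 / π) * √(2 / π) = 2 / π := mul_self_sqrt (by positivity)
  have hsin := two_mul_sin_mul_sin (i * x) (j * x)
  push_cast
  rw [sub_mul, add_mul, ← hsin]
  unfold phiF
  linear_combination (sin (i * x) * sin (j * x)) * hsq

lemma sum_range_phiF_mul_phiF {n i j : ℕ} (hi : i ∈ Set.Ioo 0 n) (hj : j ∈ Set.Ioo 0 n) :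
    π / n * ∑ k ∈ Finset.range n, phiF i (π / n * k) * phiF j (π / n * k)
      = if i = j then 1 else 0 := by
  obtain ⟨hi₀, hin⟩ := hi
  obtain ⟨hj₀, hjn⟩ := hj
  have hn : 0 < n := by omega
  have hadd : ¬ (2 * n : ℤ) ∣ i + j := fun h => by
    have := Int.le_of_dvd (by omega) h
    omega
  simp only [phiF_mul_phiF]
  rw [← Finset.sum_div, Finset.sum_sub_distrib, sum_range_cos_int_mul_pi_div hn hadd]
  split_ifs with hij
  · have hcos : cos ((j + j : ℤ) * π) = 1 := by
      rw [← cos_int_mul_two_pi j]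
      push_cast
      ring_nf
    rw [hij, hcos]
    simp [hn.ne']
  · have hsub : ¬ (2 * n : ℤ) ∣ i - j := fun h => by
      have := Int.eq_zero_of_abs_lt_dvd h (by rw [abs_lt]; omega)
      omega
    have hcos : cos ((i + j : ℤ) * π) = cos ((i - j : ℤ) * π) := by
      rw [← cos_add_int_mul_two_pi ((i - j : ℤ) * π) j]
      push_cast
      ring_nf
    rw [sum_range_cos_int_mul_pi_div hn hsub, hcos, sub_self, zero_div, mul_zero]

end Orthonormality

section Parseval

lemma integral_comp_intFloor {E : Type*} [NormedAddCommGroup E] [NormedSpace ℝ E]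
    [CompleteSpace E] (g : ℤ → E) (n : ℕ) :
    ∫ u in (0 : ℝ)..n, g ⌊u⌋ = ∑ k ∈ Finset.range n, g k := by
  have hcell (k : ℕ) :
      Set.EqOn (fun _ : ℝ => g k) (fun u => g ⌊u⌋) (Set.uIoo (k : ℝ) (k + 1 : ℕ)) := by
    intro u hu
    rw [Set.uIoo_of_le (by push_cast; linarith)] at hu
    have hfloor : ⌊u⌋ = k := Int.floor_eq_iff.2 ⟨hu.1.le, by exact_mod_cast hu.2⟩
    simp only [hfloor]
  rw [← Nat.cast_zero, ← sum_integral_adjacent_intervals (a := fun k : ℕ => (k : ℝ)) fun k _ =>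
    intervalIntegrable_const.congr_uIoo (hcell k)]
  refine Finset.sum_congr rfl fun k _ => ?_
  rw [← integral_congr_uIoo (hcell k)]
  simp

lemma integral_comp_kap {E : Type*} [NormedAddCommGroup E] [NormedSpace ℝ E] [CompleteSpace E]
    {n : ℕ} (hn : 0 < n) (f : ℝ → E) :
    ∫ z in (0 : ℝ)..π, f (kap n z) = (π / n) • ∑ k ∈ Finset.range n, f (π / n * k) := by
  have hh : π / n ≠ 0 := by positivity
  have hscale : π / (π / n) = n := by field_simp
  unfold kap
  rw [integral_comp_div (fun u => f (π / n * ⌊u⌋)) hh, zero_div, hscale,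
    integral_comp_intFloor fun m => f (π / n * m)]
  simp only [Int.cast_natCast]

lemma integral_sum_mul_phiF_kap_sq {n : ℕ} (hn : 0 < n) (a : ℕ → ℝ) :
    ∫ z in (0 : ℝ)..π, (∑ j ∈ Finset.range (n - 1), a j * phiF (j + 1) (kap n z)) ^ 2
      = ∑ j ∈ Finset.range (n - 1), a j ^ 2 := by
  have horth (i) (hi : i ∈ Finset.range (n - 1)) (j) (hj : j ∈ Finset.range (n - 1)) :
      π / n * ∑ k ∈ Finset.range n, phiF (i + 1) (π / n * k) * phiF (j + 1) (π / n * k)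
        = if i = j then 1 else 0 := by
    rw [Finset.mem_range] at hi hj
    simpa using sum_range_phiF_mul_phiF (n := n) (i := i + 1) (j := j + 1)
      ⟨by omega, by omega⟩ ⟨by omega, by omega⟩
  rw [integral_comp_kap hn fun w => (∑ j ∈ Finset.range (n - 1), a j * phiF (j + 1) w) ^ 2]
  calc (π / n) • ∑ k ∈ Finset.range n,
        (∑ j ∈ Finset.range (n - 1), a j * phiF (j + 1) (π / n * k)) ^ 2
      = ∑ i ∈ Finset.range (n - 1), ∑ j ∈ Finset.range (n - 1), a i * a j *
          (π / n * ∑ k ∈ Finset.range n,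
            phiF (i + 1) (π / n * k) * phiF (j + 1) (π / n * k)) := by
        simp only [smul_eq_mul, sq, Finset.sum_mul_sum]
        simp only [Finset.mul_sum]
        rw [Finset.sum_comm]
        refine Finset.sum_congr rfl fun i _ => ?_
        rw [Finset.sum_comm]
        exact Finset.sum_congr rfl fun j _ => Finset.sum_congr rfl fun k _ => by ring
    _ = ∑ i ∈ Finset.range (n - 1), ∑ j ∈ Finset.range (n - 1),
          a i * a j * (if i = j then 1 else 0) :=
        Finset.sum_congr rfl fun i hi => Finset.sum_congr rfl fun j hj => by rw [horth i hi j hj]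
    _ = ∑ j ∈ Finset.range (n - 1), a j ^ 2 := by
        refine Finset.sum_congr rfl fun i hi => ?_
        simp only [mul_ite, mul_one, mul_zero, Finset.sum_ite_eq, if_pos hi, sq]

end Parseval

section Interpolation

variable {E : Type*} [SeminormedAddCommGroup E] [NormedSpace ℝ E]

/-- The piecewise-linear interpolant of a sequence `f` indexed by `ℤ`. A grid of mesh `h` is treated
by evaluating it at `x / h`; see `phiIn_eq_intInterp`. -/
def intInterp (f : ℤ → E) (u : ℝ) : E :=
  AffineMap.lineMap (f ⌊u⌋) (f (⌊u⌋ + 1)) (Int.fract u)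

lemma intInterp_mem {f : ℤ → E} {S : Set E} (hS : Convex ℝ S) (hf : ∀ m, f m ∈ S) (u : ℝ) :
    intInterp f u ∈ S :=
  hS.lineMap_mem (hf _) (hf _) ⟨Int.fract_nonneg u, (Int.fract_lt_one u).le⟩

lemma dist_intInterp_le {f : ℤ → E} {K : NNReal} (hf : LipschitzWith K f) {u v : ℝ}
    (huv : u ≤ v) : dist (intInterp f u) (intInterp f v) ≤ K * (v - u) := by
  have hstep (m : ℤ) : dist (f m) (f (m + 1)) ≤ K := by
    simpa [Int.dist_eq'] using hf.dist_le_mul m (m + 1)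
  have hu := Int.floor_add_fract u
  have hv := Int.floor_add_fract v
  rcases (Int.floor_le_floor huv).eq_or_lt with hsame | hlt
  · have hdist : dist (Int.fract u) (Int.fract v) = v - u := by
      rw [dist_comm, dist_eq, ← Int.self_sub_floor, ← Int.self_sub_floor, hsame,
        sub_sub_sub_cancel_right, abs_of_nonneg (sub_nonneg.2 huv)]
    rw [intInterp, intInterp, hsame, dist_lineMap_lineMap, hdist, mul_comm (K : ℝ)]
    exact mul_le_mul_of_nonneg_left (hstep _) (sub_nonneg.2 huv)
  · have hleft : dist (intInterp f u) (f (⌊u⌋ + 1)) ≤ (1 - Int.fract u) * K := by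
      rw [intInterp, dist_lineMap_right, norm_of_nonneg (sub_nonneg.2 (Int.fract_lt_one u).le)]
      exact mul_le_mul_of_nonneg_left (hstep _) (sub_nonneg.2 (Int.fract_lt_one u).le)
    have hmid : dist (f (⌊u⌋ + 1)) (f ⌊v⌋) ≤ K * (⌊v⌋ - (⌊u⌋ + 1)) := by
      have hle : ((⌊u⌋ + 1 : ℤ) : ℝ) ≤ ⌊v⌋ := by exact_mod_cast hlt
      have := hf.dist_le_mul (⌊u⌋ + 1) ⌊v⌋
      rw [dist_comm (⌊u⌋ + 1), Int.dist_eq, abs_of_nonneg (sub_nonneg.2 hle)] at this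
      exact_mod_cast this
    have hright : dist (f ⌊v⌋) (intInterp f v) ≤ Int.fract v * K := by
      rw [intInterp, dist_left_lineMap, norm_of_nonneg (Int.fract_nonneg v)]
      exact mul_le_mul_of_nonneg_left (hstep _) (Int.fract_nonneg v)
    calc dist (intInterp f u) (intInterp f v)
        ≤ dist (intInterp f u) (f (⌊u⌋ + 1)) + dist (f (⌊u⌋ + 1)) (f ⌊v⌋)
          + dist (f ⌊v⌋) (intInterp f v) := dist_triangle4 _ _ _ _
      _ ≤ (1 - Int.fract u) * K + K * (⌊v⌋ - (⌊u⌋ + 1)) + Int.fract v * K := by gcongr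
      _ = K * (v - u) := by linear_combination (K : ℝ) * (hv - hu)

lemma lipschitzWith_intInterp {f : ℤ → E} {K : NNReal} (hf : LipschitzWith K f) :
    LipschitzWith K (intInterp f) := by
  refine LipschitzWith.of_dist_le_mul fun u v => ?_
  rcases le_total u v with huv | hvu
  · rw [dist_comm u, dist_eq, abs_of_nonneg (sub_nonneg.2 huv)]
    exact dist_intInterp_le hf huv
  · rw [dist_comm (intInterp f u), dist_eq, abs_of_nonneg (sub_nonneg.2 hvu)]
    exact dist_intInterp_le hf hvu

end Interpolation

section Eigenfunctions

lemma sqrt_two_div_pi_le_one : √(2 / π) ≤ 1 := by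
  rw [sqrt_le_one, div_le_one pi_pos]
  exact two_le_pi

lemma abs_phiF_le_one (j : ℕ) (x : ℝ) : |phiF j x| ≤ 1 := by
  rw [phiF, abs_mul, abs_of_nonneg (sqrt_nonneg _)]
  exact mul_le_one₀ sqrt_two_div_pi_le_one (abs_nonneg _) (abs_sin_le_one _)

lemma lipschitzWith_phiF (j : ℕ) : LipschitzWith j (phiF j) := by
  refine LipschitzWith.of_dist_le_mul fun x y => ?_
  rw [dist_eq, phiF, phiF, ← mul_sub, abs_mul, abs_of_nonneg (sqrt_nonneg _)]
  calc √(2 / π) * |sin (j * x) - sin (j * y)|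
      ≤ 1 * |j * x - j * y| :=
        mul_le_mul sqrt_two_div_pi_le_one
          (by simpa [dist_eq] using lipschitzWith_sin.dist_le_mul (j * x) (j * y))
          (abs_nonneg _) zero_le_one
    _ = (j : NNReal) * dist x y := by
        rw [one_mul, ← mul_sub, abs_mul, Nat.abs_cast, dist_eq, NNReal.coe_natCast]

lemma phiIn_eq_intInterp {n : ℕ} (hn : 0 < n) (j : ℕ) (x : ℝ) :
    phiIn n j x = intInterp (fun m : ℤ => phiF j (π / n * m)) (x / (π / n)) := by
  have hfract : Int.fract (x / (π / n)) = n / π * (x - kap n x) := by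
    rw [← Int.self_sub_floor, kap]
    field_simp
  have hnext : π / n * ((⌊x / (π / n)⌋ + 1 : ℤ) : ℝ) = kap n x + π / n := by
    rw [kap]
    push_cast
    ring
  rw [intInterp, hfract, hnext, AffineMap.lineMap_apply_ring', phiIn, kap]
  ring

lemma abs_phiIn_le_one {n : ℕ} (hn : 0 < n) (j : ℕ) (x : ℝ) : |phiIn n j x| ≤ 1 := by
  rw [phiIn_eq_intInterp hn, abs_le]
  exact intInterp_mem (convex_Icc (-1) 1) (fun m => abs_le.1 (abs_phiF_le_one j _)) _

lemma lipschitzWith_phiIn {n : ℕ} (hn : 0 < n) (j : ℕ) : LipschitzWith j (phiIn n j) := by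
  have hh : 0 < π / n := by positivity
  have hgrid : LipschitzWith (j * (π / n).toNNReal) fun m : ℤ => phiF j (π / n * m) := by
    refine (lipschitzWith_phiF j).comp (LipschitzWith.of_dist_le_mul fun k m => ?_)
    rw [dist_eq, ← mul_sub, abs_mul, abs_of_pos hh, coe_toNNReal _ hh.le, Int.dist_eq]
  refine LipschitzWith.of_dist_le_mul fun x y => ?_
  rw [phiIn_eq_intInterp hn, phiIn_eq_intInterp hn]
  calc _ ≤ (j * (π / n).toNNReal : NNReal) * dist (x / (π / n)) (y / (π / n)) :=
        (lipschitzWith_intInterp hgrid).dist_le_mul _ _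
    _ = (j : NNReal) * dist x y := by
        rw [dist_eq, dist_eq, ← sub_div, abs_div, abs_of_pos hh, NNReal.coe_mul,
          coe_toNNReal _ hh.le]
        field_simp

lemma sq_phiIn_sub_phiIn_le {n : ℕ} (hn : 0 < n) (j : ℕ) (x y : ℝ) :
    (phiIn n j x - phiIn n j y) ^ 2 ≤ j ^ 2 * (x - y) ^ 2 := by
  rw [← mul_pow, sq_le_sq, abs_mul, Nat.abs_cast]
  simpa [dist_eq] using (lipschitzWith_phiIn hn j).dist_le_mul x y

lemma pow_four_div_sixteen_le_sq_lamEig {n j : ℕ} (hn : 0 < n) (hj : j ≤ n) :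
    (j : ℝ) ^ 4 / 16 ≤ lamEig j n ^ 2 := by
  have hjn : (j : ℝ) ≤ n := by exact_mod_cast hj
  have hsin : (j : ℝ) / n ≤ sin (j * π / (2 * n)) := by
    have := mul_le_sin (x := j * π / (2 * n)) (by positivity) (by
      rw [div_le_div_iff₀ (by positivity) two_pos]
      nlinarith [pi_pos])
    refine le_of_eq_of_le ?_ this
    field_simp
  have hlam : (j : ℝ) ^ 2 / 4 ≤ -lamEig j n := by
    calc (j : ℝ) ^ 2 / 4 = 4 * (n : ℝ) ^ 2 / 4 ^ 2 * (j / n) ^ 2 := by field_simp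
      _ ≤ 4 * (n : ℝ) ^ 2 / π ^ 2 * sin (j * π / (2 * n)) ^ 2 := by
        gcongr
        exact pi_le_four
      _ = -lamEig j n := by rw [lamEig]; ring
  calc (j : ℝ) ^ 4 / 16 = ((j : ℝ) ^ 2 / 4) ^ 2 := by ring
    _ ≤ (-lamEig j n) ^ 2 := by gcongr
    _ = lamEig j n ^ 2 := neg_sq _

end Eigenfunctions

section TimeIntegrals

lemma integral_exp_neg_mul_sub {c : ℝ} (hc : c ≠ 0) (s t : ℝ) :
    ∫ r in s..t, exp (-(c * (t - r))) = (1 - exp (-(c * (t - s)))) / c := by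
  rw [integral_comp_sub_left (fun u => exp (-(c * u))), sub_self,
    integral_comp_mul_left (fun v => exp (-v)) hc, integral_comp_neg exp, integral_exp]
  simp [div_eq_inv_mul]

lemma one_sub_exp_neg_le_min (x : ℝ) : 1 - exp (-x) ≤ min x 1 :=
  le_min (by linarith [one_sub_le_exp_neg x]) (by linarith [exp_pos (-x)])

lemma sq_one_sub_exp_neg_le_min {x : ℝ} (hx : 0 ≤ x) : (1 - exp (-x)) ^ 2 ≤ min x 1 := by
  have hle : exp (-x) ≤ 1 := exp_le_one_iff.2 (neg_nonpos.2 hx)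
  exact (sq_le (sub_nonneg.2 hle) (by linarith [exp_pos (-x)])).trans (one_sub_exp_neg_le_min x)

lemma min_mul_div_eq_min {μ : ℝ} (hμ : 0 < μ) (d : ℝ) : min (μ * d) 1 / μ = min d (1 / μ) := by
  rw [← min_div_div_right hμ.le, mul_div_cancel_left₀ _ hμ.ne']

lemma integral_sq_exp_mul_le {μ : ℝ} (hμ : 0 < μ) (p s t : ℝ) :
    ∫ r in s..t, (exp (-μ * (t - r)) * p) ^ 2 ≤ p ^ 2 * min (t - s) (1 / μ) := by
  have hsq (r : ℝ) : (exp (-μ * (t - r)) * p) ^ 2 = p ^ 2 * exp (-(2 * μ * (t - r))) := by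
    rw [mul_pow, ← exp_nat_mul]
    ring_nf
  simp only [hsq]
  rw [integral_const_mul, integral_exp_neg_mul_sub (by positivity)]
  gcongr
  calc (1 - exp (-(2 * μ * (t - s)))) / (2 * μ)
      ≤ min (2 * μ * (t - s)) 1 / (2 * μ) := by gcongr; exact one_sub_exp_neg_le_min _
    _ = min (t - s) (1 / (2 * μ)) := min_mul_div_eq_min (by positivity) _
    _ ≤ min (t - s) (1 / μ) := by gcongr; linarith

lemma integral_sq_exp_mul_sub_exp_mul_le {μ s t : ℝ} (hμ : 0 < μ) (p q a : ℝ) (hst : s ≤ t) :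
    ∫ r in a..s, (exp (-μ * (t - r)) * p - exp (-μ * (s - r)) * q) ^ 2
      ≤ p ^ 2 * min (t - s) (1 / μ) + (p - q) ^ 2 / μ := by
  set w := 1 - exp (-(μ * (t - s))) with hw
  have hwmin : w ^ 2 ≤ min (μ * (t - s)) 1 :=
    sq_one_sub_exp_neg_le_min (mul_nonneg hμ.le (sub_nonneg.2 hst))
  have hfactor (r : ℝ) : (exp (-μ * (t - r)) * p - exp (-μ * (s - r)) * q) ^ 2
      = (p - q - w * p) ^ 2 * exp (-(2 * μ * (s - r))) := by
    have hshift : exp (-μ * (t - r)) = exp (-μ * (s - r)) * (1 - w) := by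
      rw [hw, sub_sub_cancel, ← exp_add]
      ring_nf
    have hexp : exp (-(2 * μ * (s - r))) = exp (-μ * (s - r)) ^ 2 := by
      rw [← exp_nat_mul]
      ring_nf
    rw [hshift, hexp]
    ring
  simp only [hfactor]
  rw [integral_const_mul, integral_exp_neg_mul_sub (by positivity)]
  calc (p - q - w * p) ^ 2 * ((1 - exp (-(2 * μ * (s - a)))) / (2 * μ))
      ≤ (p - q - w * p) ^ 2 * (1 / (2 * μ)) := by
        gcongr
        exact sub_le_self _ (exp_pos _).le
    _ ≤ (2 * ((p - q) ^ 2 + p ^ 2 * w ^ 2)) * (1 / (2 * μ)) := by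
        gcongr
        linarith [sq_nonneg (p - q + w * p)]
    _ = p ^ 2 * (w ^ 2 / μ) + (p - q) ^ 2 / μ := by field_simp; ring
    _ ≤ p ^ 2 * (min (μ * (t - s)) 1 / μ) + (p - q) ^ 2 / μ := by gcongr
    _ = p ^ 2 * min (t - s) (1 / μ) + (p - q) ^ 2 / μ := by rw [min_mul_div_eq_min hμ]

end TimeIntegrals

section ModeSums

lemma min_one_div_pow_four_le {v : ℝ} (hv : 0 < v) : min 1 (16 / v ^ 4) ≤ 9 / (1 + v) ^ 2 := by
  rcases le_total v 2 with h | h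
  · refine (min_le_left _ _).trans ?_
    rw [le_div_iff₀ (by positivity)]
    nlinarith
  · refine (min_le_right _ _).trans ?_
    rw [div_le_div_iff₀ (by positivity) (by positivity)]
    have hlin : (4 * (1 + v)) ^ 2 ≤ (3 * v ^ 2) ^ 2 :=
      pow_le_pow_left₀ (by positivity) (by nlinarith) 2
    linarith

lemma min_pow_four_le_sub {ε m : ℝ} (hε : 0 < ε) (hm : 0 ≤ m) :
    min (ε ^ 4) (16 / (m + 1) ^ 4)
      ≤ 9 * ε ^ 3 * (1 / (1 + m * ε) - 1 / (1 + (m + 1) * ε)) := by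
  have hscale : min (ε ^ 4) (16 / (m + 1) ^ 4)
      = ε ^ 4 * min 1 (16 / ((m + 1) * ε) ^ 4) := by
    rw [mul_min_of_nonneg _ _ (by positivity), mul_one]
    congr 1
    field_simp
  calc min (ε ^ 4) (16 / (m + 1) ^ 4)
      ≤ ε ^ 4 * (9 / (1 + (m + 1) * ε) ^ 2) := by
        rw [hscale]
        gcongr
        exact min_one_div_pow_four_le (by positivity)
    _ ≤ ε ^ 4 * (9 / ((1 + m * ε) * (1 + (m + 1) * ε))) := by
        rw [sq]
        gcongr
        linarith
    _ = 9 * ε ^ 3 * (1 / (1 + m * ε) - 1 / (1 + (m + 1) * ε)) := by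
        field_simp
        ring

lemma sum_range_min_pow_four_le {ε : ℝ} (hε : 0 < ε) (N : ℕ) :
    ∑ j ∈ Finset.range N, min (ε ^ 4) (16 / ((j : ℝ) + 1) ^ 4) ≤ 9 * ε ^ 3 := by
  calc ∑ j ∈ Finset.range N, min (ε ^ 4) (16 / ((j : ℝ) + 1) ^ 4)
      ≤ ∑ j ∈ Finset.range N,
          9 * ε ^ 3 * (1 / (1 + (j : ℝ) * ε) - 1 / (1 + ((j + 1 : ℕ) : ℝ) * ε)) := by
        gcongr with j
        exact_mod_cast min_pow_four_le_sub hε j.cast_nonneg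
    _ = 9 * ε ^ 3 * (1 - 1 / (1 + N * ε)) := by
        rw [← Finset.mul_sum, Finset.sum_range_sub' fun j : ℕ => 1 / (1 + (j : ℝ) * ε)]
        simp
    _ ≤ 9 * ε ^ 3 := mul_le_of_le_one_right (by positivity) (sub_le_self _ (by positivity))

lemma sum_range_min_le_rpow {d : ℝ} (hd : 0 ≤ d) (N : ℕ) :
    ∑ j ∈ Finset.range N, min d (16 / ((j : ℝ) + 1) ^ 4) ≤ 9 * d ^ (3 / 4 : ℝ) := by
  rcases hd.eq_or_lt with rfl | hpos
  · have hzero (j : ℕ) : min 0 (16 / ((j : ℝ) + 1) ^ 4) = 0 := min_eq_left (by positivity)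
    simp only [hzero, Finset.sum_const_zero]
    positivity
  · have hfour : (d ^ (1 / 4 : ℝ)) ^ 4 = d := by
      rw [← rpow_mul_natCast hd]
      norm_num
    have hthree : (d ^ (1 / 4 : ℝ)) ^ 3 = d ^ (3 / 4 : ℝ) := by
      rw [← rpow_mul_natCast hd]
      norm_num
    simpa only [hfour, hthree] using
      sum_range_min_pow_four_le (rpow_pos_of_pos hpos (1 / 4 : ℝ)) N

lemma sum_range_one_div_sq_le_two (N : ℕ) :
    ∑ j ∈ Finset.range N, 1 / ((j : ℝ) + 1) ^ 2 ≤ 2 := by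
  have hIoo : Finset.Ioo 0 (N + 1) = Finset.Ico (0 + 1) (N + 1) := rfl
  have := sum_Ioo_inv_sq_le (α := ℝ) 0 (N + 1)
  rw [hIoo, ← Finset.sum_Ico_add', ← Finset.range_eq_Ico] at this
  simpa using this

end ModeSums

section GreenFunction

variable {n : ℕ} {s t : ℝ}

lemma integral_Gn_sq (hn : 0 < n) (t x : ℝ) :
    ∫ z in (0 : ℝ)..π, Gn n t x z ^ 2
      = ∑ j ∈ Finset.range (n - 1), (exp (-lamEig (j + 1) n ^ 2 * t) * phiIn n (j + 1) x) ^ 2 :=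
  integral_sum_mul_phiF_kap_sq hn _

lemma integral_Gn_sub_Gn_sq (hn : 0 < n) (s t x y : ℝ) :
    ∫ z in (0 : ℝ)..π, (Gn n t x z - Gn n s y z) ^ 2
      = ∑ j ∈ Finset.range (n - 1),
          (exp (-lamEig (j + 1) n ^ 2 * t) * phiIn n (j + 1) x
            - exp (-lamEig (j + 1) n ^ 2 * s) * phiIn n (j + 1) y) ^ 2 := by
  rw [← integral_sum_mul_phiF_kap_sq hn]
  simp only [Gn, ← Finset.sum_sub_distrib, sub_mul]

lemma one_div_sq_lamEig_succ_le {j : ℕ} (hj : j + 1 ≤ n) :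
    1 / lamEig (j + 1) n ^ 2 ≤ 16 / ((j : ℝ) + 1) ^ 4 := by
  have hle := pow_four_div_sixteen_le_sq_lamEig (by omega) hj
  calc 1 / lamEig (j + 1) n ^ 2 ≤ 1 / (((j + 1 : ℕ) : ℝ) ^ 4 / 16) := by gcongr
    _ = 16 / ((j : ℝ) + 1) ^ 4 := by rw [one_div_div, Nat.cast_succ]

lemma sq_lamEig_succ_pos {j : ℕ} (hj : j + 1 ≤ n) : 0 < lamEig (j + 1) n ^ 2 :=
  lt_of_lt_of_le (by positivity) (pow_four_div_sixteen_le_sq_lamEig (by omega) hj)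

lemma sq_phiIn_mul_min_le {j : ℕ} (hj : j + 1 ≤ n) (x : ℝ) {d : ℝ} (hd : 0 ≤ d) :
    phiIn n (j + 1) x ^ 2 * min d (1 / lamEig (j + 1) n ^ 2) ≤ min d (16 / ((j : ℝ) + 1) ^ 4) := by
  have hphi : phiIn n (j + 1) x ^ 2 ≤ 1 :=
    (sq_le_one_iff_abs_le_one _).2 (abs_phiIn_le_one (by omega) _ x)
  calc phiIn n (j + 1) x ^ 2 * min d (1 / lamEig (j + 1) n ^ 2)
      ≤ min d (1 / lamEig (j + 1) n ^ 2) := mul_le_of_le_one_left (by positivity) hphi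
    _ ≤ min d (16 / ((j : ℝ) + 1) ^ 4) := min_le_min_left _ (one_div_sq_lamEig_succ_le hj)

lemma sq_phiIn_sub_div_sq_lamEig_le {j : ℕ} (hj : j + 1 ≤ n) (x y : ℝ) :
    (phiIn n (j + 1) x - phiIn n (j + 1) y) ^ 2 / lamEig (j + 1) n ^ 2
      ≤ 16 * (x - y) ^ 2 * (1 / ((j : ℝ) + 1) ^ 2) := by
  calc (phiIn n (j + 1) x - phiIn n (j + 1) y) ^ 2 / lamEig (j + 1) n ^ 2
      ≤ ((j + 1 : ℕ) : ℝ) ^ 2 * (x - y) ^ 2 * (16 / ((j : ℝ) + 1) ^ 4) := by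
        rw [div_eq_mul_one_div]
        exact mul_le_mul (sq_phiIn_sub_phiIn_le (by omega) _ x y) (one_div_sq_lamEig_succ_le hj)
          (by positivity) (by positivity)
    _ = 16 * (x - y) ^ 2 * (1 / ((j : ℝ) + 1) ^ 2) := by
        push_cast
        field_simp

lemma integral_integral_Gn_sq_le (hn : 0 < n) (x : ℝ) (hst : s ≤ t) :
    ∫ r in s..t, ∫ z in (0 : ℝ)..π, Gn n (t - r) x z ^ 2 ≤ 9 * (t - s) ^ (3 / 4 : ℝ) := by
  simp only [integral_Gn_sq hn]
  rw [integral_finsetSum fun j _ => Continuous.intervalIntegrable (by fun_prop) _ _]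
  refine (Finset.sum_le_sum fun j hj => ?_).trans (sum_range_min_le_rpow (sub_nonneg.2 hst) (n - 1))
  have hjn : j + 1 ≤ n := by have := Finset.mem_range.1 hj; omega
  exact (integral_sq_exp_mul_le (sq_lamEig_succ_pos hjn) _ s t).trans
    (sq_phiIn_mul_min_le hjn x (sub_nonneg.2 hst))

lemma integral_integral_Gn_sub_Gn_sq_le (hn : 0 < n) (x y a : ℝ) (hst : s ≤ t) :
    ∫ r in a..s, ∫ z in (0 : ℝ)..π, (Gn n (t - r) x z - Gn n (s - r) y z) ^ 2
      ≤ 32 * (x - y) ^ 2 + 9 * (t - s) ^ (3 / 4 : ℝ) := by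
  simp only [integral_Gn_sub_Gn_sq hn]
  rw [integral_finsetSum fun j _ => Continuous.intervalIntegrable (by fun_prop) _ _]
  have hmode (j) (hj : j ∈ Finset.range (n - 1)) :
      ∫ r in a..s, (exp (-lamEig (j + 1) n ^ 2 * (t - r)) * phiIn n (j + 1) x
          - exp (-lamEig (j + 1) n ^ 2 * (s - r)) * phiIn n (j + 1) y) ^ 2
        ≤ min (t - s) (16 / ((j : ℝ) + 1) ^ 4) + 16 * (x - y) ^ 2 * (1 / ((j : ℝ) + 1) ^ 2) := by
    have hjn : j + 1 ≤ n := by have := Finset.mem_range.1 hj; omega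
    exact (integral_sq_exp_mul_sub_exp_mul_le (sq_lamEig_succ_pos hjn) _ _ a hst).trans
      (add_le_add (sq_phiIn_mul_min_le hjn x (sub_nonneg.2 hst))
        (sq_phiIn_sub_div_sq_lamEig_le hjn x y))
  calc _ ≤ ∑ j ∈ Finset.range (n - 1), (min (t - s) (16 / ((j : ℝ) + 1) ^ 4)
          + 16 * (x - y) ^ 2 * (1 / ((j : ℝ) + 1) ^ 2)) := Finset.sum_le_sum hmode
    _ ≤ 9 * (t - s) ^ (3 / 4 : ℝ) + 16 * (x - y) ^ 2 * 2 := by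
        rw [Finset.sum_add_distrib, ← Finset.mul_sum]
        gcongr
        · exact sum_range_min_le_rpow (sub_nonneg.2 hst) _
        · exact sum_range_one_div_sq_le_two _
    _ = 32 * (x - y) ^ 2 + 9 * (t - s) ^ (3 / 4 : ℝ) := by ring

end GreenFunction

lemma rpow_le_rpow_sub_mul_rpow {d T a b : ℝ} (hd : 0 < d) (hdT : d ≤ T) (hab : a ≤ b) :
    d ^ b ≤ T ^ (b - a) * d ^ a := by
  calc d ^ b = d ^ (b - a) * d ^ a := by rw [← rpow_add hd, sub_add_cancel]
    _ ≤ T ^ (b - a) * d ^ a := by gcongr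

theorem stmt14_general {α T : ℝ} (hα : α ≤ 1) (hT : 0 < T) :
    ∃ C : ℝ, 0 < C ∧ ∀ n : ℕ, 0 < n → ∀ x y a s t : ℝ, s < t → t - s ≤ T →
      (∫ r in a..s, ∫ z in (0 : ℝ)..π, (Gn n (t - r) x z - Gn n (s - r) y z) ^ 2)
          ≤ C * ((x - y) ^ 2 + (t - s) ^ (3 * α / 4))
        ∧ (∫ r in s..t, ∫ z in (0 : ℝ)..π, Gn n (t - r) x z ^ 2)
          ≤ C * (t - s) ^ (3 / 4 : ℝ) := by
  set K := T ^ (3 / 4 - 3 * α / 4)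
  have hK : 0 ≤ K := by positivity
  refine ⟨32 * (1 + K), by positivity, fun n hn x y a s t hst hstT => ?_⟩
  have hdiff := integral_integral_Gn_sub_Gn_sq_le hn x y a hst.le
  have hsingle := integral_integral_Gn_sq_le hn x hst.le
  have hrpow : (t - s) ^ (3 / 4 : ℝ) ≤ K * (t - s) ^ (3 * α / 4) :=
    rpow_le_rpow_sub_mul_rpow (sub_pos.2 hst) hstT (by linarith)
  have hd (b : ℝ) : 0 ≤ (t - s) ^ b := rpow_nonneg (sub_nonneg.2 hst.le) b
  constructor <;> nlinarith [hd (3 / 4), hd (3 * α / 4), sq_nonneg (x - y)]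

/-- For every `α ∈ (0,1)` and `T > 0` there is `C = C(α,T) > 0`, independent of `n`, such
that for all `n ≥ 2`, `x, y ∈ (0,π)`, `0 ≤ s < t ≤ T`:
`∫₀ˢ∫₀^π |G^n_{t-r}(x,z) - G^n_{s-r}(y,z)|² dz dr ≤ C(|x-y|² + (t-s)^{3α/4})` and
`∫ₛᵗ∫₀^π |G^n_{t-r}(x,z)|² dz dr ≤ C(t-s)^{3/4}`. -/
theorem stmt14 (α T : ℝ) (hα : α ∈ Set.Ioo (0 : ℝ) 1) (hT : 0 < T) :
    ∃ C : ℝ, 0 < C ∧ ∀ n : ℕ, 2 ≤ n →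
      ∀ x ∈ Set.Ioo 0 Real.pi, ∀ y ∈ Set.Ioo 0 Real.pi, ∀ s t : ℝ, 0 ≤ s → s < t → t ≤ T →
        ((∫ r in (0:ℝ)..s, ∫ z in (0:ℝ)..Real.pi, (Gn n (t - r) x z - Gn n (s - r) y z) ^ 2)
            ≤ C * ((x - y) ^ 2 + (t - s) ^ (3 * α / 4)))
        ∧ ((∫ r in s..t, ∫ z in (0:ℝ)..Real.pi, (Gn n (t - r) x z) ^ 2)
            ≤ C * (t - s) ^ ((3 : ℝ) / 4)) := by
  obtain ⟨C, hC, hbound⟩ := stmt14_general hα.2.le hT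
  exact ⟨C, hC, fun n hn x _ y _ s t _ hst _ => hbound n (by omega) x y 0 s t hst (by linarith)⟩
end
end
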